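/- The functions w₁(U) = b/f, w₂(U) = fb, w₃(U) = q/g, w₄(U) = (fb + gq)/(gq)^{1/4} form a complete set of Riemann invariants for the reduced system: for every U = (f, b, g, q) ∈ 𝒰 and all indices j, k ∈ {1, 2, 3, 4}, the gradient ∇wₖ(U) (with respect to (f, b, g, q)) satisfies ∇wₖ(U)·r_j(U) = 0 whenever j ≠ k, and ∇wₖ(U)·rₖ(U) ≠ 0, where r₁(U) = (−f/b, 1, 0, 0), r₂(U) = ((fb−3gq)/(4qb), (fb−3gq)/(4qf), g/q, 1), r₃(U) = (0, 0, −g/q, 1), r₄(U) = (0, 0, g/q, 1). -/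

import Mathlib

/-- The right eigenvectors of the flux Jacobian of the reduced two-phase
thin-film system, evaluated at `U = (f, b, g, q)`. -/
noncomputable def eigvec (f b g q : ℝ) : Fin 4 → (Fin 4 → ℝ) :=
  ![![-f/b, 1, 0, 0],
    ![(f*b - 3*(g*q))/(4*q*b), (f*b - 3*(g*q))/(4*q*f), g/q, 1],
    ![0, 0, -g/q, 1],
    ![0, 0, g/q, 1]]

/-- The Riemann invariants `w₁ = b/f`, `w₂ = fb`, `w₃ = q/g`,
`w₄ = (fb + gq)/(gq)^{1/4}` as functions of the state `U = (f,b,g,q)`. -/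
noncomputable def riemannInv : Fin 4 → ((Fin 4 → ℝ) → ℝ) :=
  ![fun U => U 1 / U 0,
    fun U => U 0 * U 1,
    fun U => U 3 / U 2,
    fun U => (U 0 * U 1 + U 2 * U 3) / (U 2 * U 3) ^ ((1:ℝ)/4)]

/-!
The four functions depend only on the ratios `b/f`, `q/g` and the products `m = fb`, `s = gq`. To
first order `r₁` changes only `b/f`, `r₃` only `q/g` and `r₄` only `s`, while `r₂` fixes both ratios
and changes both products. It fixes `w₄` as well, since
`s ^ (1/4) * d((m + s) / s ^ (1/4)) = dm + (3s - m)/(4s) * ds`,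
and along `r₂` one has `dm = -(3s - m)/(2q)` and `ds = 2g = 2s/q`. So the matrix of the `∇wₖ · rⱼ`
is diagonal, and where `f, b ≠ 0` and `s > 0` its diagonal entries vanish only if `m = 3s`.
-/

section Calculus

variable {𝕜 E : Type*} [NontriviallyNormedField 𝕜] [NormedAddCommGroup E]

section NormedField

variable [NormedSpace 𝕜 E]

theorem hasFDerivAt_fun_div {c d : E → 𝕜} {c' d' : E →L[𝕜] 𝕜} {x : E}
    (hc : HasFDerivAt c c' x) (hd : HasFDerivAt d d' x) (hx : d x ≠ 0) :
    HasFDerivAt (fun y => c y / d y) ((d x ^ 2)⁻¹ • (d x • c' - c x • d')) x := by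
  have h_inv : HasFDerivAt (fun y => (d y)⁻¹) (-(d x ^ 2)⁻¹ • d') x :=
    (hasDerivAt_inv hx).comp_hasFDerivAt x hd
  simp only [div_eq_mul_inv]
  refine (hc.fun_mul h_inv).congr_fderiv ?_
  ext v
  simp only [add_apply, sub_apply, smul_apply, smul_eq_mul]
  field

theorem hasFDerivAt_clm_mul_clm (φ ψ : E →L[𝕜] 𝕜) (x : E) :
    HasFDerivAt (fun y => φ y * ψ y) (φ x • ψ + ψ x • φ) x :=
  φ.hasFDerivAt.fun_mul ψ.hasFDerivAt

theorem fderiv_clm_mul_clm (φ ψ : E →L[𝕜] 𝕜) (x v : E) :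
    fderiv 𝕜 (fun y => φ y * ψ y) x v = φ x * ψ v + ψ x * φ v := by
  rw [(hasFDerivAt_clm_mul_clm φ ψ x).fderiv]
  rfl

theorem fderiv_clm_div_clm (φ ψ : E →L[𝕜] 𝕜) {x : E} (hx : ψ x ≠ 0) (v : E) :
    fderiv 𝕜 (fun y => φ y / ψ y) x v = (ψ x * φ v - φ x * ψ v) / ψ x ^ 2 := by
  rw [(hasFDerivAt_fun_div φ.hasFDerivAt ψ.hasFDerivAt hx).fderiv, div_eq_inv_mul]
  rfl

end NormedField

theorem hasFDerivAt_add_div_rpow [NormedSpace ℝ E] {m s : E → ℝ} {m' s' : E →L[ℝ] ℝ} {x : E}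
    (p : ℝ) (hm : HasFDerivAt m m' x) (hs : HasFDerivAt s s' x) (hx : 0 < s x) :
    HasFDerivAt (fun y => (m y + s y) / s y ^ p)
      ((s x ^ p)⁻¹ • (m' + (1 - p - p * m x / s x) • s')) x := by
  have hpow : s x ^ p ≠ 0 := (Real.rpow_pos_of_pos hx p).ne'
  refine (hasFDerivAt_fun_div (hm.fun_add hs) (hs.rpow_const (.inl hx.ne')) hpow).congr_fderiv ?_
  ext v
  simp only [add_apply, sub_apply, smul_apply, smul_eq_mul, Real.rpow_sub_one hx.ne']
  field

end Calculus

section Gradients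

/-- The coordinate functional `U ↦ U i` on the state space. -/
noncomputable abbrev coord (i : Fin 4) : (Fin 4 → ℝ) →L[ℝ] ℝ :=
  ContinuousLinearMap.proj i

variable {U : Fin 4 → ℝ} (v : Fin 4 → ℝ)

theorem fderiv_riemannInv_zero (hU : U 0 ≠ 0) :
    fderiv ℝ (riemannInv 0) U v = (U 0 * v 1 - U 1 * v 0) / U 0 ^ 2 :=
  fderiv_clm_div_clm (coord 1) (coord 0) hU v

variable (U) in
theorem fderiv_riemannInv_one : fderiv ℝ (riemannInv 1) U v = U 0 * v 1 + U 1 * v 0 :=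
  fderiv_clm_mul_clm (coord 0) (coord 1) U v

theorem fderiv_riemannInv_two (hU : U 2 ≠ 0) :
    fderiv ℝ (riemannInv 2) U v = (U 2 * v 3 - U 3 * v 2) / U 2 ^ 2 :=
  fderiv_clm_div_clm (coord 3) (coord 2) hU v

theorem fderiv_riemannInv_three (hU : 0 < U 2 * U 3) :
    fderiv ℝ (riemannInv 3) U v =
      (fderiv ℝ (riemannInv 1) U v
        + (3 * (U 2 * U 3) - U 0 * U 1) / (4 * (U 2 * U 3)) * (U 2 * v 3 + U 3 * v 2))
        / (U 2 * U 3) ^ ((1 : ℝ) / 4) := by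
  have hderiv : HasFDerivAt (riemannInv 3) _ U :=
    hasFDerivAt_add_div_rpow (1 / 4) (hasFDerivAt_clm_mul_clm (coord 0) (coord 1) U)
      (hasFDerivAt_clm_mul_clm (coord 2) (coord 3) U) hU
  have hcoeff : 1 - 1 / 4 - 1 / 4 * (U 0 * U 1) / (U 2 * U 3) =
      (3 * (U 2 * U 3) - U 0 * U 1) / (4 * (U 2 * U 3)) := by
    have hs := hU.ne'
    generalize U 2 * U 3 = s at hs ⊢
    field
  rw [hderiv.fderiv, fderiv_riemannInv_one, ← hcoeff, div_eq_inv_mul (_ + _)]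
  rfl

end Gradients

/-- The diagonal entries `∇wₖ(U) · rₖ(U)`, at `U = (f, b, g, q)`, of the matrix pairing the
gradients of the Riemann invariants with the eigenvectors, in closed form. Indices start at `0`, so
the entry for `wₖ` is `riemannInvRate f b g q (k - 1)`. -/
noncomputable def riemannInvRate (f b g q : ℝ) : Fin 4 → ℝ :=
  ![2 / f,
    (f * b - 3 * (g * q)) / (2 * q),
    2 / g,
    (3 * (g * q) - f * b) / (2 * q * (g * q) ^ ((1 : ℝ) / 4))]

section Pairing

variable {f b g q : ℝ}

theorem fderiv_riemannInv_zero_eigvec (hf : f ≠ 0) (hb : b ≠ 0) (j : Fin 4) :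
    fderiv ℝ (riemannInv 0) ![f, b, g, q] (eigvec f b g q j) =
      Matrix.diagonal (riemannInvRate f b g q) j 0 := by
  rw [fderiv_riemannInv_zero _ hf]
  fin_cases j <;> simp [eigvec, riemannInvRate, -div_eq_zero_iff] <;> field

theorem fderiv_riemannInv_one_eigvec (hf : f ≠ 0) (hb : b ≠ 0) (j : Fin 4) :
    fderiv ℝ (riemannInv 1) ![f, b, g, q] (eigvec f b g q j) =
      Matrix.diagonal (riemannInvRate f b g q) j 1 := by
  rw [fderiv_riemannInv_one]
  fin_cases j <;> simp [eigvec, riemannInvRate, -div_eq_zero_iff] <;> field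

theorem fderiv_riemannInv_two_eigvec (hg : g ≠ 0) (hq : q ≠ 0) (j : Fin 4) :
    fderiv ℝ (riemannInv 2) ![f, b, g, q] (eigvec f b g q j) =
      Matrix.diagonal (riemannInvRate f b g q) j 2 := by
  rw [fderiv_riemannInv_two _ hg]
  fin_cases j <;> simp [eigvec, riemannInvRate, -div_eq_zero_iff] <;> field

theorem mul_eigvec_three_add_mul_eigvec_two (hq : q ≠ 0) (j : Fin 4) :
    g * eigvec f b g q j 3 + q * eigvec f b g q j 2 = ![0, 2 * g, 0, 2 * g] j := by
  fin_cases j <;> simp [eigvec] <;> field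

theorem fderiv_riemannInv_three_eigvec (hf : f ≠ 0) (hb : b ≠ 0) (hgq : 0 < g * q) (j : Fin 4) :
    fderiv ℝ (riemannInv 3) ![f, b, g, q] (eigvec f b g q j) =
      Matrix.diagonal (riemannInvRate f b g q) j 3 := by
  have hg : g ≠ 0 := left_ne_zero_of_mul hgq.ne'
  have hq : q ≠ 0 := right_ne_zero_of_mul hgq.ne'
  have hderiv : fderiv ℝ (riemannInv 3) ![f, b, g, q] (eigvec f b g q j) =
      (Matrix.diagonal (riemannInvRate f b g q) j 1
        + (3 * (g * q) - f * b) / (4 * (g * q)) * ![0, 2 * g, 0, 2 * g] j)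
        / (g * q) ^ ((1 : ℝ) / 4) := by
    rw [← fderiv_riemannInv_one_eigvec hf hb,
      ← mul_eigvec_three_add_mul_eigvec_two (f := f) (b := b) hq]
    exact fderiv_riemannInv_three _ hgq
  rw [hderiv]
  fin_cases j <;> simp [riemannInvRate, -div_eq_zero_iff] <;> field

theorem fderiv_riemannInv_eigvec (hf : f ≠ 0) (hb : b ≠ 0) (hgq : 0 < g * q) (j k : Fin 4) :
    fderiv ℝ (riemannInv k) ![f, b, g, q] (eigvec f b g q j) =
      Matrix.diagonal (riemannInvRate f b g q) j k := by
  have hg : g ≠ 0 := left_ne_zero_of_mul hgq.ne'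
  have hq : q ≠ 0 := right_ne_zero_of_mul hgq.ne'
  fin_cases k
  · exact fderiv_riemannInv_zero_eigvec hf hb j
  · exact fderiv_riemannInv_one_eigvec hf hb j
  · exact fderiv_riemannInv_two_eigvec hg hq j
  · exact fderiv_riemannInv_three_eigvec hf hb hgq j

theorem riemannInvRate_ne_zero (hf : f ≠ 0) (hgq : 0 < g * q) (hne : f * b ≠ 3 * (g * q))
    (k : Fin 4) : riemannInvRate f b g q k ≠ 0 := by
  have hg : g ≠ 0 := left_ne_zero_of_mul hgq.ne'
  have hq : q ≠ 0 := right_ne_zero_of_mul hgq.ne'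
  have hpow : (g * q) ^ ((1 : ℝ) / 4) ≠ 0 := (Real.rpow_pos_of_pos hgq _).ne'
  fin_cases k
  · exact div_ne_zero two_ne_zero hf
  · exact div_ne_zero (sub_ne_zero.mpr hne) (mul_ne_zero two_ne_zero hq)
  · exact div_ne_zero two_ne_zero hg
  · exact div_ne_zero (sub_ne_zero.mpr hne.symm) (mul_ne_zero (mul_ne_zero two_ne_zero hq) hpow)

end Pairing

theorem riemannInv_complete_general {f b g q : ℝ}
    (hf : f ≠ 0) (hb : b ≠ 0) (hgq : 0 < g * q) (hne : f * b ≠ 3 * (g * q)) (j k : Fin 4) :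
    (j ≠ k → fderiv ℝ (riemannInv k) ![f, b, g, q] (eigvec f b g q j) = 0) ∧
      fderiv ℝ (riemannInv k) ![f, b, g, q] (eigvec f b g q k) ≠ 0 := by
  simp only [fderiv_riemannInv_eigvec hf hb hgq, Matrix.diagonal_apply_eq]
  exact ⟨Matrix.diagonal_apply_ne _, riemannInvRate_ne_zero hf hgq hne k⟩

/-- `w₁, w₂, w₃, w₄` form a complete set of Riemann invariants: at every
`U ∈ 𝒰` and all `j, k`, `∇wₖ(U)·r_j(U) = 0` for `j ≠ k` and
`∇wₖ(U)·rₖ(U) ≠ 0`. -/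
theorem riemannInv_complete (f b g q : ℝ)
    (hf : 0 < f) (hb : 0 < b) (hg : 0 < g) (hq : 0 < q) (hU : f*b < g*q) :
    ∀ j k : Fin 4,
      (j ≠ k →
        fderiv ℝ (riemannInv k) ![f, b, g, q] (eigvec f b g q j) = 0) ∧
      fderiv ℝ (riemannInv k) ![f, b, g, q] (eigvec f b g q k) ≠ 0 := by
  have hgq : 0 < g * q := mul_pos hg hq
  exact riemannInv_complete_general hf.ne' hb.ne' hgq (ne_of_lt (by linarith))
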